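/- Let p > 1 and let q ≤ 0 be continuous and monotone increasing on [0, x_0]. Let φ(x, ρ) solve φ' = ρ - (q(x)/ρ^{p-1}) |S_p(φ)|^p with φ(0, ρ) = 0, and set θ(x, ρ) = φ(x, ρ)/ρ. Then ∂θ/∂ρ (x_0, ρ) ≤ 0 for all ρ ≥ (-2q(0))^{1/p}. Moreover, if ∂θ/∂ρ (x_0, ρ) = 0 for some ρ ≥ (-2q(0))^{1/p}, then q ≡ 0 on (0, x_0]. -/

import Mathlib

/-!
The equation satisfied by `∂φ/∂ρ` is linear. Solving it with an integrating factor `R` gives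
`∂θ/∂ρ = -e / (ρ R)` with `e' = m R (p f(φ) - φ f'(φ))`, where `f = |S_p| ^ p` and the weight
`m = -q / ρ ^ p` is nonnegative and decreasing. The right-hand side may change sign, but `e` is
never smaller than at the last peak of `f(φ)`. Indeed, let `N` be the zero of `f` between
consecutive peaks `P < P'`. The arcs of `|S_p|` are concave, so `(z - N) f'(z) ≤ p f(z)` on
`[P, P']`, and hence `e - (N / ρ) R` increases as `φ` runs from `P` to `P'`. Moreover `R` is
smallest at `P`: if `μ` is the value of `m` where `φ = N`, then `m ≥ μ` while `f(φ)` descends and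
`m ≤ μ` while it ascends, so `R (1 + μ f(φ))` increases, and `f` is largest at `P`. Before the first
peak `z f'(z) < p f(z)`, so there `e` becomes positive unless `m` vanishes.
-/

open Set Filter Topology
open scoped NNReal

/-! ### Calculus on intervals -/

theorem monotoneOn_Icc_of_hasDerivAt_nonneg {f f' : ℝ → ℝ} {a b : ℝ}
    (hf : ∀ x ∈ Icc a b, HasDerivAt f (f' x) x) (hf' : ∀ x ∈ Ioo a b, 0 ≤ f' x) :
    MonotoneOn f (Icc a b) := by
  refine monotoneOn_of_hasDerivWithinAt_nonneg (f' := f') (convex_Icc a b)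
    (fun x hx => (hf x hx).continuousAt.continuousWithinAt) ?_ ?_ <;> rw [interior_Icc]
  · exact fun x hx => (hf x (Ioo_subset_Icc_self hx)).hasDerivWithinAt
  · exact hf'

theorem strictMonoOn_Icc_of_hasDerivAt_pos {f f' : ℝ → ℝ} {a b : ℝ}
    (hf : ∀ x ∈ Icc a b, HasDerivAt f (f' x) x) (hf' : ∀ x ∈ Ioo a b, 0 < f' x) :
    StrictMonoOn f (Icc a b) := by
  refine strictMonoOn_of_hasDerivWithinAt_pos (f' := f') (convex_Icc a b)
    (fun x hx => (hf x hx).continuousAt.continuousWithinAt) ?_ ?_ <;> rw [interior_Icc]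
  · exact fun x hx => (hf x (Ioo_subset_Icc_self hx)).hasDerivWithinAt
  · exact hf'

theorem strictAntiOn_Icc_of_hasDerivAt_neg {f f' : ℝ → ℝ} {a b : ℝ}
    (hf : ∀ x ∈ Icc a b, HasDerivAt f (f' x) x) (hf' : ∀ x ∈ Ioo a b, f' x < 0) :
    StrictAntiOn f (Icc a b) := by
  refine strictAntiOn_of_hasDerivWithinAt_neg (f' := f') (convex_Icc a b)
    (fun x hx => (hf x hx).continuousAt.continuousWithinAt) ?_ ?_ <;> rw [interior_Icc]
  · exact fun x hx => (hf x (Ioo_subset_Icc_self hx)).hasDerivWithinAt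
  · exact hf'

theorem exists_nonpos_of_hasDerivAt_le_neg {f f' : ℝ → ℝ} {a c : ℝ} (hc : 0 < c)
    (hf : ∀ x, HasDerivAt f (f' x) x) (hf' : ∀ x, a ≤ x → f' x ≤ -c) : ∃ x, a ≤ x ∧ f x ≤ 0 := by
  have hx : a ≤ a + |f a| / c := le_add_of_nonneg_right (by positivity)
  refine ⟨_, hx, ?_⟩
  have hdrop := (convex_Icc a (a + |f a| / c)).image_sub_le_mul_sub_of_deriv_le
    (fun x _ => (hf x).continuousAt.continuousWithinAt)
    (fun x _ => (hf x).differentiableAt.differentiableWithinAt)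
    (fun x hx => (hf x).deriv.trans_le (hf' x (interior_subset hx).1))
    a (left_mem_Icc.2 hx) _ (right_mem_Icc.2 hx) hx
  have hval : -c * (a + |f a| / c - a) = -|f a| := by field_simp; ring
  linarith [le_abs_self (f a)]

theorem exists_first_zero {f : ℝ → ℝ} {a b : ℝ} (hf : Continuous f) (hab : a ≤ b)
    (ha : 0 < f a) (hb : f b ≤ 0) : ∃ c, a < c ∧ f c = 0 ∧ ∀ x ∈ Ico a c, 0 < f x := by
  obtain ⟨c, ⟨hc, hfc⟩, hleast⟩ :=
    (isCompact_Icc.inter_right (isClosed_le hf continuous_const)).exists_isLeast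
      (⟨b, right_mem_Icc.2 hab, hb⟩ : (Icc a b ∩ {x | f x ≤ 0}).Nonempty)
  have hpos : ∀ x ∈ Ico a c, 0 < f x := fun x hx => by
    by_contra hle
    exact hx.2.not_ge (hleast ⟨⟨hx.1, hx.2.le.trans hc.2⟩, not_lt.1 hle⟩)
  have hac : a < c := lt_of_le_of_ne hc.1 (by rintro rfl; exact ha.not_ge hfc)
  refine ⟨c, hac, le_antisymm hfc ?_, hpos⟩
  refine ge_of_tendsto (hf.continuousWithinAt (s := Iio c)) ?_
  filter_upwards [Ico_mem_nhdsLT hac] with x hx using (hpos x hx).le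

theorem exists_primitive_Icc {f : ℝ → ℝ} {a b : ℝ} (hab : a ≤ b) (hf : ContinuousOn f (Icc a b)) :
    ∃ F : ℝ → ℝ, F a = 0 ∧ ∀ x ∈ Icc a b, HasDerivAt F (f x) x := by
  have hcont : Continuous fun t => f (projIcc a b hab t) :=
    hf.comp_continuous (continuous_subtype_val.comp continuous_projIcc) fun t =>
      (projIcc a b hab t).2
  refine ⟨fun x => ∫ t in a..x, f (projIcc a b hab t), intervalIntegral.integral_same,
    fun x hx => ?_⟩
  have hderiv := (hcont.integral_hasStrictDerivAt a x).hasDerivAt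
  rwa [projIcc_of_mem hab hx] at hderiv

/-! ### Differentiation of solutions in a parameter -/

theorem eventually_norm_sub_sub_smul_le {X E : Type*} [TopologicalSpace X] [CompactSpace X]
    [NormedAddCommGroup E] [NormedSpace ℝ E] {G G' : ℝ → X → E} {ρ : ℝ}
    (hG : ∀ᶠ r in 𝓝 ρ, ∀ x, HasDerivAt (fun s => G s x) (G' r x) r)
    (hG' : ∀ x, ContinuousAt (fun z : ℝ × X => G' z.1 z.2) (ρ, x)) {ε : ℝ} (hε : 0 < ε) :
    ∀ᶠ r in 𝓝 ρ, ∀ x, ‖G r x - G ρ x - (r - ρ) • G' ρ x‖ ≤ ε * |r - ρ| := by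
  have hclose : ∀ᶠ r in 𝓝 ρ, ∀ x ∈ (univ : Set X), ‖G' r x - G' ρ x‖ < ε :=
    isCompact_univ.eventually_forall_of_forall_eventually fun x _ => by
      have hfix : ContinuousAt (fun z : ℝ × X => G' ρ z.2) (ρ, x) :=
        (hG' x).comp_of_eq (continuousAt_const.prodMk continuousAt_snd) rfl
      have hnorm := ((hG' x).sub hfix).norm
      exact hnorm.eventually_lt continuousAt_const (by simpa using hε)
  obtain ⟨δ, hδ, hball⟩ := Metric.eventually_nhds_iff_ball.1 (hG.and hclose)
  filter_upwards [Metric.ball_mem_nhds ρ hδ] with r hr x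
  have hmean := (convex_ball ρ δ).norm_image_sub_le_of_norm_hasDerivWithin_le
    (f := fun s => G s x - (s - ρ) • G' ρ x)
    (fun s hs => (((hball s hs).1 x).fun_sub
      (((hasDerivAt_id s).sub_const ρ).smul_const (G' ρ x))).hasDerivWithinAt)
    (fun s hs => by simpa only [one_smul] using ((hball s hs).2 x (mem_univ x)).le)
    (Metric.mem_ball_self hδ) hr
  simpa only [sub_self, zero_smul, sub_zero, sub_right_comm, Real.norm_eq_abs] using hmean

theorem gronwallBound_zero_mul (K c ε x : ℝ) :
    gronwallBound 0 K (c * ε) x = c * gronwallBound 0 K ε x := by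
  rcases eq_or_ne K 0 with rfl | hK
  · simp only [gronwallBound_K0]
    ring
  · simp only [gronwallBound_of_K_ne_0 hK]
    ring

theorem hasDerivAt_param_of_linearization {E : Type*} [NormedAddCommGroup E] [NormedSpace ℝ E]
    {F : ℝ → ℝ → E → E} {X : ℝ → ℝ → E} {v v' : ℝ → E} {a b ρ : ℝ} {K : ℝ≥0} (hab : a ≤ b)
    (hF : ∀ᶠ r in 𝓝 ρ, ∀ t ∈ Icc a b, LipschitzWith K (F r t))
    (hX : ∀ᶠ r in 𝓝 ρ, ∀ t ∈ Icc a b, HasDerivAt (X r) (F r t (X r t)) t)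
    (hXa : ∀ᶠ r in 𝓝 ρ, X r a = X ρ a)
    (hv : ∀ t ∈ Icc a b, HasDerivAt v (v' t) t) (hva : v a = 0)
    (hlin : ∀ ε > 0, ∀ᶠ r in 𝓝 ρ, ∀ t ∈ Icc a b,
      ‖F r t (X ρ t + (r - ρ) • v t) - F ρ t (X ρ t) - (r - ρ) • v' t‖ ≤ ε * |r - ρ|) :
    HasDerivAt (fun r => X r b) (v b) ρ := by
  refine hasDerivAt_iff_isLittleO.2 (Asymptotics.isLittleO_iff.2 fun c hc => ?_)
  set B := |gronwallBound 0 K 1 (b - a)|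
  filter_upwards [hF, hX, hXa, hlin (c / (B + 1)) (by positivity)] with r hFr hXr hXar hlinr
  have happrox : ∀ t ∈ Icc a b, HasDerivAt (fun t => X ρ t + (r - ρ) • v t)
      (F ρ t (X ρ t) + (r - ρ) • v' t) t := fun t ht =>
    (hX.self_of_nhds t ht).add ((hv t ht).const_smul (r - ρ))
  have hgronwall := dist_le_of_approx_trajectories_ODE_of_mem (v := F r) (s := fun _ => univ)
    (K := K) (δ := 0) (εf := 0) (εg := c / (B + 1) * |r - ρ|)
    (fun t ht => (hFr t (Ico_subset_Icc_self ht)).lipschitzOnWith)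
    (fun t ht => (hXr t ht).continuousAt.continuousWithinAt)
    (fun t ht => (hXr t (Ico_subset_Icc_self ht)).hasDerivWithinAt)
    (fun t _ => (dist_self _).le) (fun t _ => mem_univ _)
    (fun t ht => (happrox t ht).continuousAt.continuousWithinAt)
    (fun t ht => (happrox t (Ico_subset_Icc_self ht)).hasDerivWithinAt)
    (fun t ht => by
      rw [dist_comm, dist_eq_norm, ← sub_sub]
      exact hlinr t (Ico_subset_Icc_self ht))
    (fun t _ => mem_univ _) (by simp [hXar, hva]) b (right_mem_Icc.2 hab)
  rw [dist_eq_norm, ← sub_sub, zero_add, ← mul_one (c / (B + 1) * |r - ρ|),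
    gronwallBound_zero_mul] at hgronwall
  calc ‖X r b - X ρ b - (r - ρ) • v b‖ ≤ c / (B + 1) * |r - ρ| * B :=
        hgronwall.trans (mul_le_mul_of_nonneg_left (le_abs_self _) (by positivity))
    _ = c * ‖r - ρ‖ * (B / (B + 1)) := by rw [Real.norm_eq_abs]; ring
    _ ≤ c * ‖r - ρ‖ := mul_le_of_le_one_right (by positivity)
        ((div_le_one (by positivity)).2 (le_add_of_nonneg_right zero_le_one))

theorem eventually_abs_separated_linearization_le {q c c' f f' w v : ℝ → ℝ} {a b ρ : ℝ}
    (hq : ContinuousOn q (Icc a b)) (hc : ∀ᶠ r in 𝓝 ρ, HasDerivAt c (c' r) r)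
    (hc' : ContinuousAt c' ρ) (hf : ∀ z, HasDerivAt f (f' z) z) (hf' : Continuous f')
    (hw : ContinuousOn w (Icc a b)) (hv : ContinuousOn v (Icc a b)) {ε : ℝ} (hε : 0 < ε) :
    ∀ᶠ r in 𝓝 ρ, ∀ t ∈ Icc a b, |r - q t * c r * f (w t + (r - ρ) * v t) -
      (ρ - q t * c ρ * f (w t)) -
      (r - ρ) * (1 - q t * (c' ρ * f (w t) + c ρ * (f' (w t) * v t)))| ≤ ε * |r - ρ| := by
  rw [continuousOn_iff_continuous_domRestrict] at hq hw hv
  have hfcont : Continuous f := continuous_iff_continuousAt.2 fun z => (hf z).continuousAt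
  have htaylor := eventually_norm_sub_sub_smul_le (ρ := ρ) (ε := ε)
    (G := fun r (x : Icc a b) => r - q x * c r * f (w x + (r - ρ) * v x))
    (G' := fun r (x : Icc a b) => 1 - q x * (c' r * f (w x + (r - ρ) * v x) +
      c r * (f' (w x + (r - ρ) * v x) * v x))) ?_ (fun x => ?_) hε
  · filter_upwards [htaylor] with r hr t ht
    simpa only [sub_self, zero_mul, add_zero, smul_eq_mul, Real.norm_eq_abs] using hr ⟨t, ht⟩
  · filter_upwards [hc] with r hr x
    have hline : HasDerivAt (fun s => w x + (s - ρ) * v x) (v x) r := by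
      simpa only [one_mul] using (((hasDerivAt_id' r).sub_const ρ).mul_const (v x)).const_add (w x)
    refine ((hasDerivAt_id r).sub
      ((hr.const_mul (q x)).mul ((hf _).comp r hline))).congr_deriv ?_
    simp only [Function.comp_apply]
    ring
  · have hc₁ : ContinuousAt (fun z : ℝ × Icc a b => c z.1) (ρ, x) :=
      hc.self_of_nhds.continuousAt.comp_of_eq continuousAt_fst rfl
    have hc₁' : ContinuousAt (fun z : ℝ × Icc a b => c' z.1) (ρ, x) :=
      hc'.comp_of_eq continuousAt_fst rfl
    have hv₂ : Continuous fun z : ℝ × Icc a b => v z.2 := hv.comp continuous_snd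
    have hline : Continuous fun z : ℝ × Icc a b => w z.2 + (z.1 - ρ) * v z.2 :=
      (hw.comp continuous_snd).add ((continuous_fst.sub continuous_const).mul hv₂)
    exact continuousAt_const.sub <| (hq.comp continuous_snd).continuousAt.mul <|
      (hc₁'.mul (hfcont.comp hline).continuousAt).add
        (hc₁.mul ((hf'.comp hline).mul hv₂).continuousAt)

theorem hasDerivAt_param_of_separated_ode {φ : ℝ → ℝ → ℝ} {q c c' f f' v : ℝ → ℝ}
    {a b ρ : ℝ} {L : ℝ≥0} (hab : a ≤ b) (hq : ContinuousOn q (Icc a b))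
    (hc : ∀ᶠ r in 𝓝 ρ, HasDerivAt c (c' r) r) (hc' : ContinuousAt c' ρ)
    (hf : ∀ z, HasDerivAt f (f' z) z) (hf' : Continuous f') (hfL : LipschitzWith L f)
    (hφ : ∀ᶠ r in 𝓝 ρ, ∀ t ∈ Icc a b,
      HasDerivAt (fun t => φ t r) (r - q t * c r * f (φ t r)) t)
    (hφa : ∀ᶠ r in 𝓝 ρ, φ a r = φ a ρ)
    (hv : ∀ t ∈ Icc a b, HasDerivAt v
      (1 - q t * (c' ρ * f (φ t ρ) + c ρ * (f' (φ t ρ) * v t))) t)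
    (hva : v a = 0) : HasDerivAt (φ b) (v b) ρ := by
  obtain ⟨M, hM⟩ := isCompact_Icc.exists_bound_of_continuousOn hq
  have hM0 : 0 ≤ M := (norm_nonneg _).trans (hM a (left_mem_Icc.2 hab))
  refine hasDerivAt_param_of_linearization (F := fun r t z => r - q t * c r * f z)
    (X := fun r t => φ t r) (K := (M * (|c ρ| + 1)).toNNReal * L) hab ?_ hφ hφa hv hva
    fun ε hε => ?_
  · have hcbound : ∀ᶠ r in 𝓝 ρ, |c r| ≤ |c ρ| + 1 :=
      hc.self_of_nhds.continuousAt.abs.eventually_le_const (lt_add_one _)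
    filter_upwards [hcbound] with r hr t ht
    refine .of_dist_le_mul fun y z => ?_
    rw [NNReal.coe_mul, Real.coe_toNNReal _ (by positivity), Real.dist_eq,
      show r - q t * c r * f y - (r - q t * c r * f z) = -(q t * c r * (f y - f z)) by ring,
      abs_neg, abs_mul, abs_mul, mul_assoc _ (L : ℝ)]
    gcongr
    exacts [hM t ht, hfL.dist_le_mul y z]
  · exact eventually_abs_separated_linearization_le hq hc hc' hf hf'
      (fun t ht => (hφ.self_of_nhds t ht).continuousAt.continuousWithinAt)
      (fun t ht => (hv t ht).continuousAt.continuousWithinAt) hε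

/-! ### Signed powers -/

/-- The signed power `|x| ^ (p - 1) * sign x`, written `x^{(p-1)}` for the `p`-Laplacian; the
parameter is `p` because maps with conjugate parameters are inverse to each other. -/
noncomputable def signedPow (p x : ℝ) : ℝ := |x| ^ (p - 2) * x

theorem signedPow_zero (p : ℝ) : signedPow p 0 = 0 := mul_zero _

theorem signedPow_neg (p x : ℝ) : signedPow p (-x) = -signedPow p x := by
  simp only [signedPow, abs_neg, mul_neg]

theorem signedPow_of_pos {x : ℝ} (p : ℝ) (hx : 0 < x) : signedPow p x = x ^ (p - 1) := by
  rw [signedPow, abs_of_pos hx, ← Real.rpow_add_one hx.ne']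
  ring_nf

theorem signedPow_pos_iff {p x : ℝ} : 0 < signedPow p x ↔ 0 < x := by
  rcases eq_or_ne x 0 with rfl | hx
  · rw [signedPow_zero]
  · exact mul_pos_iff_of_pos_left (Real.rpow_pos_of_pos (abs_pos.2 hx) _)

theorem signedPow_mul_self {p : ℝ} (hp : p ≠ 0) (x : ℝ) : signedPow p x * x = |x| ^ p := by
  rcases eq_or_ne x 0 with rfl | hx
  · rw [mul_zero, abs_zero, Real.zero_rpow hp]
  · rw [signedPow, mul_assoc, ← abs_mul_abs_self x, ← pow_two, ← Real.rpow_natCast,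
      ← Real.rpow_add (abs_pos.2 hx)]
    norm_num

theorem abs_signedPow {p : ℝ} (hp : 1 < p) (x : ℝ) : |signedPow p x| = |x| ^ (p - 1) := by
  rcases eq_or_ne x 0 with rfl | hx
  · rw [signedPow_zero, abs_zero, Real.zero_rpow (sub_pos.2 hp).ne']
  · rw [signedPow, abs_mul, abs_of_nonneg (by positivity),
      ← Real.rpow_add_one (abs_pos.2 hx).ne']
    ring_nf

theorem strictMono_signedPow {p : ℝ} (hp : 1 < p) : StrictMono (signedPow p) := by
  refine strictMono_of_odd_strictMonoOn_nonneg (signedPow_neg p) fun x hx y _ hxy => ?_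
  have hy : 0 < y := (mem_Ici.1 hx).trans_lt hxy
  rcases (mem_Ici.1 hx).eq_or_lt with rfl | hx
  · rwa [signedPow_zero, signedPow_pos_iff]
  · rw [signedPow_of_pos p hx, signedPow_of_pos p hy]
    exact Real.rpow_lt_rpow hx.le hxy (sub_pos.2 hp)

theorem signedPow_signedPow {p q : ℝ} (hpq : p.HolderConjugate q) (x : ℝ) :
    signedPow q (signedPow p x) = x := by
  have hexp : (p - 1) * (q - 1) = 1 := by linarith [hpq.sub_one_mul_conj]
  have hpos : ∀ y : ℝ, 0 < y → signedPow q (signedPow p y) = y := fun y hy => by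
    rw [signedPow_of_pos q (signedPow_pos_iff.2 hy), signedPow_of_pos p hy,
      ← Real.rpow_mul hy.le, hexp, Real.rpow_one]
  rcases lt_trichotomy x 0 with hx | rfl | hx
  · simpa only [signedPow_neg, neg_inj] using hpos (-x) (neg_pos.2 hx)
  · rw [signedPow_zero, signedPow_zero]
  · exact hpos x hx

theorem abs_signedPow_rpow {p q : ℝ} (hpq : p.HolderConjugate q) (x : ℝ) :
    |signedPow p x| ^ q = |x| ^ p := by
  rw [abs_signedPow hpq.lt, ← Real.rpow_mul (abs_nonneg x), hpq.sub_one_mul_conj]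

theorem continuous_signedPow {p : ℝ} (hp : 1 < p) : Continuous (signedPow p) :=
  (strictMono_signedPow hp).monotone.continuous_of_surjective fun x =>
    ⟨_, signedPow_signedPow (Real.HolderConjugate.conjExponent hp).symm x⟩

theorem hasDerivAt_abs_rpow_signedPow {p : ℝ} (hp : 1 < p) (x : ℝ) :
    HasDerivAt (fun y : ℝ => |y| ^ p) (p * signedPow p x) x := by
  simpa only [signedPow, mul_assoc] using hasDerivAt_abs_rpow x hp

/-! ### Generalized sine functions -/

/-- `S` is a generalized sine function with derivative `C`: a solution of
`-((S')^{(p-1)})' = (p-1) S^{(p-1)}` on the energy level `|S|^p + |S'|^p = 1`. No initial value is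
prescribed, so that the class is stable under `S ↦ -S` and under time reversal. -/
structure IsGenSine (p : ℝ) (S C : ℝ → ℝ) : Prop where
  one_lt : 1 < p
  hasDerivAt : ∀ x, HasDerivAt S (C x) x
  ode : ∀ x, HasDerivAt (fun t => signedPow p (C t)) (-(p - 1) * signedPow p (S x)) x
  energy : ∀ x, |S x| ^ p + |C x| ^ p = 1

/-- The derivative of `|S| ^ p`, in terms of `S` and its derivative `C`. -/
noncomputable def sinePowDeriv (p : ℝ) (S C : ℝ → ℝ) (x : ℝ) : ℝ := p * signedPow p (S x) * C x

theorem hasDerivAt_abs_rpow_comp {p : ℝ} {S C : ℝ → ℝ} (hp : 1 < p) {x : ℝ}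
    (hS : HasDerivAt S (C x) x) :
    HasDerivAt (fun t => |S t| ^ p) (sinePowDeriv p S C x) x :=
  (hasDerivAt_abs_rpow_signedPow hp (S x)).comp x hS

/-- A valley of a function `f` with derivative `f'`: it descends from the peak `P`, of height `1`,
to its bottom `N` and ascends to `P'`, and on the way the tangent inequality
`(z - N) f' z ≤ p f z` holds, so that `f z / |z - N| ^ p` decreases away from the bottom. -/
structure IsValley (p : ℝ) (f f' : ℝ → ℝ) (P N P' : ℝ) : Prop where
  peak : f P = 1
  lt_bottom : P < N
  descending : ∀ z ∈ Icc P N, f' z ≤ 0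
  ascending : ∀ z ∈ Icc N P', 0 ≤ f' z
  tangent : ∀ z ∈ Icc P P', (z - N) * f' z ≤ p * f z

theorem sinePowDeriv_of_eq_zero (p : ℝ) {S : ℝ → ℝ} (C : ℝ → ℝ) {x : ℝ} (hx : S x = 0) :
    sinePowDeriv p S C x = 0 := by
  rw [sinePowDeriv, hx, signedPow_zero, mul_zero, zero_mul]

theorem sinePowDeriv_neg (p : ℝ) (S C : ℝ → ℝ) :
    sinePowDeriv p (fun t => -S t) (fun t => -C t) = sinePowDeriv p S C := by
  funext x
  simp only [sinePowDeriv, signedPow_neg, mul_neg, neg_mul, neg_neg]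

namespace IsGenSine

variable {p : ℝ} {S C : ℝ → ℝ}

theorem of_initial (hp : 1 < p) (hS : ∀ x, HasDerivAt S (C x) x)
    (hC : ∀ x, HasDerivAt (fun t => signedPow p (C t)) (-(p - 1) * signedPow p (S x)) x)
    (h0 : |S 0| ^ p + |C 0| ^ p = 1) : IsGenSine p S C := by
  refine ⟨hp, hS, hC, fun x => ?_⟩
  have hpq : p.HolderConjugate p.conjExponent := .conjExponent hp
  have hderiv : ∀ t, HasDerivAt (fun t => |S t| ^ p + |C t| ^ p) 0 t := fun t => by
    have hpowC := (hasDerivAt_abs_rpow_signedPow hpq.symm.lt (signedPow p (C t))).comp t (hC t)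
    simp only [Function.comp_def, abs_signedPow_rpow hpq, signedPow_signedPow hpq] at hpowC
    refine ((hasDerivAt_abs_rpow_comp hp (hS t)).fun_add hpowC).congr_deriv ?_
    rw [sinePowDeriv]
    linear_combination -signedPow p (S t) * C t * hpq.sub_one_mul_conj
  exact h0 ▸ is_const_of_deriv_eq_zero (fun t => (hderiv t).differentiableAt)
    (fun t => (hderiv t).deriv) x 0

theorem neg (h : IsGenSine p S C) : IsGenSine p (fun t => -S t) fun t => -C t where
  one_lt := h.one_lt
  hasDerivAt x := (h.hasDerivAt x).fun_neg
  ode x := by simpa only [signedPow_neg, mul_neg] using (h.ode x).fun_neg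
  energy x := by simpa only [abs_neg] using h.energy x

theorem timeReversal (h : IsGenSine p S C) :
    IsGenSine p (fun t => S (-t)) fun t => -C (-t) where
  one_lt := h.one_lt
  hasDerivAt x := by
    simpa only [Function.comp_def, mul_neg_one] using (h.hasDerivAt (-x)).comp x (hasDerivAt_neg x)
  ode x := by
    simpa only [Function.comp_def, signedPow_neg, mul_neg_one, neg_neg] using
      ((h.ode (-x)).comp x (hasDerivAt_neg x)).fun_neg
  energy x := by simpa only [abs_neg] using h.energy (-x)

theorem continuous (h : IsGenSine p S C) : Continuous S :=
  continuous_iff_continuousAt.2 fun x => (h.hasDerivAt x).continuousAt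

theorem continuous_deriv (h : IsGenSine p S C) : Continuous C := by
  have hpq : p.HolderConjugate p.conjExponent := .conjExponent h.one_lt
  have hW : Continuous fun x => signedPow p (C x) :=
    continuous_iff_continuousAt.2 fun x => (h.ode x).continuousAt
  simpa only [Function.comp_def, signedPow_signedPow hpq] using
    (continuous_signedPow hpq.symm.lt).comp hW

theorem abs_rpow_le_one (h : IsGenSine p S C) (x : ℝ) : |S x| ^ p ≤ 1 := by
  linarith [h.energy x, Real.rpow_nonneg (abs_nonneg (C x)) p]

theorem abs_le_one (h : IsGenSine p S C) (x : ℝ) : |S x| ≤ 1 := by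
  rw [← Real.rpow_le_rpow_iff (abs_nonneg _) zero_le_one (zero_lt_one.trans h.one_lt),
    Real.one_rpow]
  exact h.abs_rpow_le_one x

theorem abs_deriv_le_one (h : IsGenSine p S C) (x : ℝ) : |C x| ≤ 1 := by
  rw [← Real.rpow_le_rpow_iff (abs_nonneg _) zero_le_one (zero_lt_one.trans h.one_lt),
    Real.one_rpow]
  linarith [h.energy x, Real.rpow_nonneg (abs_nonneg (S x)) p]

theorem abs_rpow_eq_one_iff (h : IsGenSine p S C) {x : ℝ} : |S x| ^ p = 1 ↔ C x = 0 := by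
  rw [← abs_eq_zero, ← Real.rpow_eq_zero (abs_nonneg _) (zero_lt_one.trans h.one_lt).ne',
    ← h.energy x, left_eq_add]

theorem deriv_ne_zero (h : IsGenSine p S C) {x : ℝ} (hx : S x = 0) : C x ≠ 0 := fun hC => by
  have hone := h.abs_rpow_eq_one_iff.2 hC
  rw [hx, abs_zero, Real.zero_rpow (zero_lt_one.trans h.one_lt).ne'] at hone
  exact zero_ne_one hone

theorem lipschitz (h : IsGenSine p S C) (x y : ℝ) : |S x - S y| ≤ |x - y| := by
  simpa only [one_mul, Real.norm_eq_abs] using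
    convex_univ.norm_image_sub_le_of_norm_hasDerivWithin_le
      (fun t _ => (h.hasDerivAt t).hasDerivWithinAt) (fun t _ => h.abs_deriv_le_one t)
      (mem_univ y) (mem_univ x)

theorem abs_sinePowDeriv_le (h : IsGenSine p S C) (x : ℝ) : |sinePowDeriv p S C x| ≤ p := by
  have hp : 0 < p := zero_lt_one.trans h.one_lt
  have hS : |S x| ^ (p - 1) ≤ 1 :=
    Real.rpow_le_one (abs_nonneg _) (h.abs_le_one x) (sub_nonneg.2 h.one_lt.le)
  rw [sinePowDeriv, abs_mul, abs_mul, abs_signedPow h.one_lt, abs_of_pos hp]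
  calc p * |S x| ^ (p - 1) * |C x| ≤ p * 1 * 1 := by gcongr; exact h.abs_deriv_le_one x
    _ = p := by ring

theorem lipschitzWith_abs_rpow (h : IsGenSine p S C) :
    LipschitzWith p.toNNReal fun z => |S z| ^ p :=
  lipschitzWith_of_nnnorm_deriv_le
    (fun z => (hasDerivAt_abs_rpow_comp h.one_lt (h.hasDerivAt z)).differentiableAt) fun z => by
      rw [(hasDerivAt_abs_rpow_comp h.one_lt (h.hasDerivAt z)).deriv, ← NNReal.coe_le_coe,
        Real.coe_toNNReal _ (zero_lt_one.trans h.one_lt).le]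
      exact h.abs_sinePowDeriv_le z

theorem continuous_sinePowDeriv (h : IsGenSine p S C) : Continuous (sinePowDeriv p S C) :=
  (((continuous_signedPow h.one_lt).comp h.continuous).const_mul p).mul h.continuous_deriv

theorem strictAntiOn_deriv (h : IsGenSine p S C) {a b : ℝ} (hS : ∀ x ∈ Ioo a b, 0 < S x) :
    StrictAntiOn C (Icc a b) := by
  have hW : StrictAntiOn (fun x => signedPow p (C x)) (Icc a b) :=
    strictAntiOn_Icc_of_hasDerivAt_neg (fun x _ => h.ode x) fun x hx =>
      mul_neg_of_neg_of_pos (neg_lt_zero.2 (sub_pos.2 h.one_lt)) (signedPow_pos_iff.2 (hS x hx))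
  exact fun x hx y hy hxy => (strictMono_signedPow h.one_lt).lt_iff_lt.1 (hW hx hy hxy)

theorem sub_mul_deriv_lt_of_gt (h : IsGenSine p S C) {N z : ℝ} (hN : S N = 0) (hz : N < z)
    (hS : ∀ x ∈ Ioo N z, 0 < S x) : (z - N) * C z < S z := by
  obtain ⟨ξ, hξ, hslope⟩ := exists_hasDerivAt_eq_slope S C hz h.continuous.continuousOn
    fun x _ => h.hasDerivAt x
  have hC : C z < C ξ := h.strictAntiOn_deriv hS (Ioo_subset_Icc_self hξ)
    (right_mem_Icc.2 hz.le) hξ.2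
  rwa [hslope, hN, sub_zero, lt_div_iff₀ (sub_pos.2 hz), mul_comm] at hC

theorem sub_mul_deriv_lt_of_lt (h : IsGenSine p S C) {z N : ℝ} (hN : S N = 0) (hz : z < N)
    (hS : ∀ x ∈ Ioo z N, 0 < S x) : (z - N) * C z < S z := by
  have := h.timeReversal.sub_mul_deriv_lt_of_gt (N := -N) (z := -z) (by simpa using hN)
    (neg_lt_neg hz) fun x hx => hS (-x) ⟨lt_neg.1 hx.2, neg_lt.1 hx.1⟩
  simp only [neg_neg] at this
  linarith

theorem mul_sinePowDeriv_lt (h : IsGenSine p S C) {s z : ℝ} (hS : 0 < S z)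
    (htangent : s * C z < S z) : s * sinePowDeriv p S C z < p * |S z| ^ p := by
  have hp : 0 < p := zero_lt_one.trans h.one_lt
  rw [← signedPow_mul_self hp.ne']
  calc s * sinePowDeriv p S C z = p * signedPow p (S z) * (s * C z) := by
        rw [sinePowDeriv]; ring
    _ < p * signedPow p (S z) * S z :=
        mul_lt_mul_of_pos_left htangent (mul_pos hp (signedPow_pos_iff.2 hS))
    _ = p * (signedPow p (S z) * S z) := mul_assoc ..

theorem exists_deriv_eq_zero (h : IsGenSine p S C) {N : ℝ} (hN : S N = 0) (hC : 0 < C N) :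
    ∃ P > N, C P = 0 ∧ (∀ x ∈ Ico N P, 0 < C x) ∧ ∀ x ∈ Ioc N P, 0 < S x := by
  have hSpos : ∀ x > N, (∀ t ∈ Ioo N x, 0 < C t) → 0 < S x := fun x hx hpos =>
    hN ▸ strictMonoOn_Icc_of_hasDerivAt_pos (fun t _ => h.hasDerivAt t) hpos
      (left_mem_Icc.2 hx.le) (right_mem_Icc.2 hx.le) hx
  have hex : ∃ x ≥ N, C x ≤ 0 := by
    by_contra! hpos
    have hs : 0 < S (N + 1) := hSpos _ (by linarith) fun t ht => hpos t ht.1.le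
    obtain ⟨x, hx, hWx⟩ := exists_nonpos_of_hasDerivAt_le_neg (a := N + 1)
      (mul_pos (sub_pos.2 h.one_lt) (signedPow_pos_iff (p := p).2 hs)) h.ode fun x hx => by
        rw [neg_mul, neg_le_neg_iff]
        refine mul_le_mul_of_nonneg_left ?_ (sub_pos.2 h.one_lt).le
        refine (strictMono_signedPow h.one_lt).monotone ?_
        exact monotoneOn_Icc_of_hasDerivAt_nonneg (fun t _ => h.hasDerivAt t)
          (fun t ht => (hpos t (by linarith [ht.1])).le) (left_mem_Icc.2 hx) (right_mem_Icc.2 hx) hx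
    exact hWx.not_gt (signedPow_pos_iff.2 (hpos x (by linarith)))
  obtain ⟨x, hx, hCx⟩ := hex
  obtain ⟨P, hNP, hCP, hpos⟩ := exists_first_zero h.continuous_deriv hx hC hCx
  exact ⟨P, hNP, hCP, hpos, fun x hx =>
    hSpos x hx.1 fun t ht => hpos t ⟨ht.1.le, ht.2.trans_le hx.2⟩⟩

theorem exists_eq_zero (h : IsGenSine p S C) {P : ℝ} (hP : C P = 0) (hS : 0 < S P) :
    ∃ N > P, S N = 0 ∧ (∀ x ∈ Ico P N, 0 < S x) ∧ ∀ x ∈ Ioc P N, C x < 0 := by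
  have hCneg : ∀ x > P, (∀ t ∈ Ioo P x, 0 < S t) → C x < 0 := fun x hx hpos =>
    hP ▸ h.strictAntiOn_deriv hpos (left_mem_Icc.2 hx.le) (right_mem_Icc.2 hx.le) hx
  have hex : ∃ x ≥ P, S x ≤ 0 := by
    by_contra! hpos
    have hc : C (P + 1) < 0 := hCneg _ (by linarith) fun t ht => hpos t ht.1.le
    obtain ⟨x, hx, hSx⟩ := exists_nonpos_of_hasDerivAt_le_neg (a := P + 1) (neg_pos.2 hc)
      h.hasDerivAt fun x hx => by
        rw [neg_neg]
        exact (h.strictAntiOn_deriv fun t ht => hpos t (by linarith [ht.1])).antitoneOn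
          (left_mem_Icc.2 hx) (right_mem_Icc.2 hx) hx
    exact hSx.not_gt (hpos x (by linarith))
  obtain ⟨x, hx, hSx⟩ := hex
  obtain ⟨N, hPN, hSN, hpos⟩ := exists_first_zero h.continuous hx hS hSx
  exact ⟨N, hPN, hSN, hpos, fun x hx =>
    hCneg x hx.1 fun t ht => hpos t ⟨ht.1.le, ht.2.trans_le hx.2⟩⟩

theorem exists_ascent (h : IsGenSine p S C) {N : ℝ} (hN : S N = 0) :
    ∃ P > N, |S P| ^ p = 1 ∧ ∀ z ∈ Ioc N P,
      0 ≤ sinePowDeriv p S C z ∧ (z - N) * sinePowDeriv p S C z < p * |S z| ^ p := by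
  wlog hC : 0 < C N generalizing S C
  · have hneg := this h.neg (neg_eq_zero.2 hN)
      (neg_pos.2 (lt_of_le_of_ne (not_lt.1 hC) (h.deriv_ne_zero hN)))
    simpa only [abs_neg, sinePowDeriv_neg] using hneg
  obtain ⟨P, hNP, hCP, hCpos, hSpos⟩ := h.exists_deriv_eq_zero hN hC
  have hp : 0 < p := zero_lt_one.trans h.one_lt
  refine ⟨P, hNP, h.abs_rpow_eq_one_iff.2 hCP, fun z hz => ⟨?_, ?_⟩⟩
  · have hCz : 0 ≤ C z := hz.2.lt_or_eq.elim (fun hlt => (hCpos z ⟨hz.1.le, hlt⟩).le)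
      fun heq => heq ▸ hCP.ge
    exact mul_nonneg (mul_pos hp (signedPow_pos_iff.2 (hSpos z hz))).le hCz
  · exact h.mul_sinePowDeriv_lt (hSpos z hz) <|
      h.sub_mul_deriv_lt_of_gt hN hz.1 fun t ht => hSpos t ⟨ht.1, ht.2.le.trans hz.2⟩

theorem exists_descent (h : IsGenSine p S C) {P : ℝ} (hP : |S P| ^ p = 1) :
    ∃ N > P, S N = 0 ∧ ∀ z ∈ Ico P N,
      sinePowDeriv p S C z ≤ 0 ∧ (z - N) * sinePowDeriv p S C z < p * |S z| ^ p := by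
  have hp : 0 < p := zero_lt_one.trans h.one_lt
  wlog hS : 0 < S P generalizing S C
  · have hne : S P ≠ 0 := fun h0 => by
      rw [h0, abs_zero, Real.zero_rpow hp.ne'] at hP
      exact zero_ne_one hP
    have hneg := this h.neg (by rwa [abs_neg]) (neg_pos.2 (lt_of_le_of_ne (not_lt.1 hS) hne))
    simpa only [abs_neg, neg_eq_zero, sinePowDeriv_neg] using hneg
  have hCP : C P = 0 := h.abs_rpow_eq_one_iff.1 hP
  obtain ⟨N, hPN, hSN, hSpos, hCneg⟩ := h.exists_eq_zero hCP hS
  refine ⟨N, hPN, hSN, fun z hz => ⟨?_, ?_⟩⟩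
  · have hCz : C z ≤ 0 := hz.1.lt_or_eq.elim (fun hlt => (hCneg z ⟨hlt, hz.2.le⟩).le)
      fun heq => heq ▸ hCP.le
    exact mul_nonpos_of_nonneg_of_nonpos (mul_pos hp (signedPow_pos_iff.2 (hSpos z hz))).le hCz
  · exact h.mul_sinePowDeriv_lt (hSpos z hz) <|
      h.sub_mul_deriv_lt_of_lt hSN hz.2 fun t ht => hSpos t ⟨hz.1.trans ht.1.le, ht.2⟩

theorem exists_valley (h : IsGenSine p S C) {P : ℝ} (hP : |S P| ^ p = 1) :
    ∃ N P', P + 1 ≤ P' ∧ |S P'| ^ p = 1 ∧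
      IsValley p (fun z => |S z| ^ p) (sinePowDeriv p S C) P N P' := by
  have hp : 0 < p := zero_lt_one.trans h.one_lt
  obtain ⟨N, hPN, hN, hdesc⟩ := h.exists_descent hP
  obtain ⟨P', hNP', hP', hasc⟩ := h.exists_ascent hN
  have hfN : sinePowDeriv p S C N = 0 := sinePowDeriv_of_eq_zero p C hN
  refine ⟨N, P', ?_, hP', hP, hPN, fun z hz => ?_, fun z hz => ?_, fun z hz => ?_⟩
  · have hone : |S P'| = 1 :=
      (Real.rpow_left_inj (abs_nonneg _) zero_le_one hp.ne').1 (hP'.trans (Real.one_rpow p).symm)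
    have hlip := h.lipschitz P' N
    rw [hN, sub_zero, hone, abs_of_pos (sub_pos.2 hNP')] at hlip
    linarith
  · exact hz.2.lt_or_eq.elim (fun hlt => (hdesc z ⟨hz.1, hlt⟩).1) fun heq => (heq ▸ hfN).le
  · exact hz.1.lt_or_eq.elim (fun hlt => (hasc z ⟨hlt, hz.2⟩).1) fun heq => (heq ▸ hfN).ge
  · rcases lt_trichotomy z N with hlt | rfl | hgt
    · exact (hdesc z ⟨hz.1, hlt⟩).2.le
    · rw [sub_self, zero_mul]
      exact mul_nonneg hp.le (Real.rpow_nonneg (abs_nonneg _) p)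
    · exact (hasc z ⟨hgt, hz.2⟩).2.le

end IsGenSine

/-! ### Variation of the Prüfer angle -/

/-- The data of the equation of variation of `φ' = ρ (1 + m f(φ))` on `[0, b]`, where `f` is a
profile with derivative `f'` and values in `[0, 1]` (`f = |S_p| ^ p` and `m = -q / ρ ^ p` for the
Prüfer angle). Here `R` is an integrating factor of the linearized equation and `e` is `R` times the
defect `φ / ρ - ∂φ/∂ρ`, so that the sign of `e b` is that of `-∂(φ / ρ)/∂ρ` at `b`. -/
structure IsPruferVariation (p ρ b : ℝ) (f f' m φ R e : ℝ → ℝ) : Prop where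
  hasDerivAt_profile : ∀ z, HasDerivAt f (f' z) z
  profile_mem : ∀ z, f z ∈ Icc 0 1
  freq_pos : 0 < ρ
  weight_nonneg : ∀ x ∈ Icc 0 b, 0 ≤ m x
  weight_anti : AntitoneOn m (Icc 0 b)
  angle_zero : φ 0 = 0
  hasDerivAt_angle : ∀ x ∈ Icc 0 b, HasDerivAt φ (ρ * (1 + m x * f (φ x))) x
  factor_pos : ∀ x, 0 < R x
  hasDerivAt_factor : ∀ x ∈ Icc 0 b, HasDerivAt R (-(ρ * m x * f' (φ x)) * R x) x
  defect_zero : e 0 = 0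
  hasDerivAt_defect :
    ∀ x ∈ Icc 0 b, HasDerivAt e (m x * R x * (p * f (φ x) - φ x * f' (φ x))) x

namespace IsPruferVariation

variable {p ρ b : ℝ} {f f' m φ R e : ℝ → ℝ}

theorem exists_factor_defect (hb : 0 ≤ b) (hf : ∀ z, HasDerivAt f (f' z) z)
    (hf' : Continuous f') (hmem : ∀ z, f z ∈ Icc 0 1) (hρ : 0 < ρ)
    (hm : ContinuousOn m (Icc 0 b)) (hm0 : ∀ x ∈ Icc 0 b, 0 ≤ m x)
    (hanti : AntitoneOn m (Icc 0 b)) (hφ0 : φ 0 = 0)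
    (hφ : ∀ x ∈ Icc 0 b, HasDerivAt φ (ρ * (1 + m x * f (φ x))) x) :
    ∃ R e, IsPruferVariation p ρ b f f' m φ R e := by
  have hfcont : Continuous f := continuous_iff_continuousAt.2 fun z => (hf z).continuousAt
  have hφc : ContinuousOn φ (Icc 0 b) := fun x hx =>
    (hφ x hx).continuousAt.continuousWithinAt
  have hf'φ : ContinuousOn (fun x => f' (φ x)) (Icc 0 b) := hf'.comp_continuousOn hφc
  obtain ⟨A, -, hA⟩ := exists_primitive_Icc hb ((hm.const_mul ρ).mul hf'φ)
  have hR : ∀ x ∈ Icc 0 b, HasDerivAt (fun x => Real.exp (-A x))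
      (-(ρ * m x * f' (φ x)) * Real.exp (-A x)) x := fun x hx =>
    (hA x hx).fun_neg.exp.congr_deriv (mul_comm _ _)
  have hRc : ContinuousOn (fun x => Real.exp (-A x)) (Icc 0 b) := fun x hx =>
    (hR x hx).continuousAt.continuousWithinAt
  obtain ⟨e, he0, he⟩ := exists_primitive_Icc hb ((hm.mul hRc).mul
    (((hfcont.comp_continuousOn hφc).const_mul p).sub (hφc.mul hf'φ)))
  exact ⟨_, e, hf, hmem, hρ, hm0, hanti, hφ0, hφ, fun _ => Real.exp_pos _, hR, he0, he⟩

theorem hasDerivAt_linearized (h : IsPruferVariation p ρ b f f' m φ R e) {x : ℝ}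
    (hx : x ∈ Icc 0 b) : HasDerivAt (fun t => φ t / ρ - e t / R t)
      (1 + m x * ((1 - p) * f (φ x) + ρ * (f' (φ x) * (φ x / ρ - e x / R x)))) x := by
  have hρ := h.freq_pos.ne'
  have hR := (h.factor_pos x).ne'
  refine (((h.hasDerivAt_angle x hx).div_const ρ).fun_sub
    ((h.hasDerivAt_defect x hx).fun_div (h.hasDerivAt_factor x hx) hR)).congr_deriv ?_
  field_simp
  ring

theorem strictMonoOn_angle (h : IsPruferVariation p ρ b f f' m φ R e) :
    StrictMonoOn φ (Icc 0 b) :=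
  strictMonoOn_Icc_of_hasDerivAt_pos h.hasDerivAt_angle fun x hx => by
    have := mul_nonneg (h.weight_nonneg x (Ioo_subset_Icc_self hx)) (h.profile_mem (φ x)).1
    exact mul_pos h.freq_pos (by linarith)

theorem continuousOn_angle (h : IsPruferVariation p ρ b f f' m φ R e) :
    ContinuousOn φ (Icc 0 b) :=
  fun x hx => (h.hasDerivAt_angle x hx).continuousAt.continuousWithinAt

theorem exists_angle_eq (h : IsPruferVariation p ρ b f f' m φ R e) {x y z : ℝ}
    (hx : x ∈ Icc 0 b) (hy : y ∈ Icc x b) (hz : z ∈ Icc (φ x) (φ y)) : ∃ c ∈ Icc x y, φ c = z :=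
  intermediate_value_Icc hy.1 (h.continuousOn_angle.mono (Icc_subset_Icc hx.1 hy.2)) hz

theorem exists_threshold (h : IsPruferVariation p ρ b f f' m φ R e) {x y N : ℝ}
    (hx : x ∈ Icc 0 b) (hy : y ∈ Icc x b) (hN : φ x ≤ N) :
    ∃ μ, 0 ≤ μ ∧ ∀ t ∈ Icc x y, (φ t ≤ N → μ ≤ m t) ∧ (N ≤ φ t → m t ≤ μ) := by
  have hsub : Icc x y ⊆ Icc 0 b := Icc_subset_Icc hx.1 hy.2
  have hmono := h.strictMonoOn_angle
  obtain ⟨c, hc, hφc⟩ := h.exists_angle_eq hx hy (z := min N (φ y))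
    ⟨le_min hN (hmono.monotoneOn hx (hsub (right_mem_Icc.2 hy.1)) hy.1), min_le_right _ _⟩
  refine ⟨m c, h.weight_nonneg c (hsub hc), fun t ht => ⟨fun hle => ?_, fun hge => ?_⟩⟩
  · have hty : φ t ≤ φ y := hmono.monotoneOn (hsub ht) (hsub (right_mem_Icc.2 hy.1)) ht.2
    exact h.weight_anti (hsub ht) (hsub hc)
      ((hmono.le_iff_le (hsub ht) (hsub hc)).1 (hφc ▸ le_min hle hty))
  · exact h.weight_anti (hsub hc) (hsub ht)
      ((hmono.le_iff_le (hsub hc) (hsub ht)).1 (hφc ▸ (min_le_left _ _).trans hge))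

theorem factor_le_of_valley (h : IsPruferVariation p ρ b f f' m φ R e) {N P' x y : ℝ}
    (hx : x ∈ Icc 0 b) (hy : y ∈ Icc x b) (hv : IsValley p f f' (φ x) N P') (hP' : φ y ≤ P') :
    R x ≤ R y := by
  have hsub : Icc x y ⊆ Icc 0 b := Icc_subset_Icc hx.1 hy.2
  have hmono := h.strictMonoOn_angle.monotoneOn
  obtain ⟨μ, hμ, hthreshold⟩ := h.exists_threshold hx hy hv.lt_bottom.le
  have hderiv : ∀ t ∈ Icc x y, HasDerivAt (fun t => R t * (1 + μ * f (φ t)))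
      (ρ * R t * (f' (φ t) * (μ - m t))) t := fun t ht => by
    refine ((h.hasDerivAt_factor t (hsub ht)).mul <| (((h.hasDerivAt_profile _).comp t
      (h.hasDerivAt_angle t (hsub ht))).const_mul μ).const_add 1).congr_deriv ?_
    simp only [Function.comp_apply]
    ring
  have hle : R x * (1 + μ * f (φ x)) ≤ R y * (1 + μ * f (φ y)) := by
    refine monotoneOn_Icc_of_hasDerivAt_nonneg hderiv (fun t ht => ?_)
      (left_mem_Icc.2 hy.1) (right_mem_Icc.2 hy.1) hy.1
    replace ht := Ioo_subset_Icc_self ht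
    have hxt : φ x ≤ φ t := hmono hx (hsub ht) ht.1
    have hty : φ t ≤ P' := (hmono (hsub ht) (hsub (right_mem_Icc.2 hy.1)) ht.2).trans hP'
    refine mul_nonneg (mul_pos h.freq_pos (h.factor_pos t)).le ?_
    rcases le_total (φ t) N with hN | hN
    · exact mul_nonneg_of_nonpos_of_nonpos (hv.descending _ ⟨hxt, hN⟩)
        (sub_nonpos.2 ((hthreshold t ht).1 hN))
    · exact mul_nonneg (hv.ascending _ ⟨hN, hty⟩) (sub_nonneg.2 ((hthreshold t ht).2 hN))
  refine le_of_mul_le_mul_right ?_ (by linarith : 0 < 1 + μ)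
  calc R x * (1 + μ) = R x * (1 + μ * f (φ x)) := by rw [hv.peak, mul_one]
    _ ≤ R y * (1 + μ * f (φ y)) := hle
    _ ≤ R y * (1 + μ) := by
      gcongr
      · exact (h.factor_pos y).le
      · exact mul_le_of_le_one_right hμ (h.profile_mem _).2

theorem defect_le_of_valley (h : IsPruferVariation p ρ b f f' m φ R e) {N P' x y : ℝ}
    (hx : x ∈ Icc 0 b) (hy : y ∈ Icc x b) (hv : IsValley p f f' (φ x) N P') (hP' : φ y ≤ P') :
    e x ≤ e y := by
  have hsub : Icc x y ⊆ Icc 0 b := Icc_subset_Icc hx.1 hy.2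
  have hmono := h.strictMonoOn_angle.monotoneOn
  have hderiv : ∀ t ∈ Icc x y, HasDerivAt (fun t => e t - N / ρ * R t)
      (m t * R t * (p * f (φ t) - (φ t - N) * f' (φ t))) t := fun t ht => by
    refine ((h.hasDerivAt_defect t (hsub ht)).fun_sub
      ((h.hasDerivAt_factor t (hsub ht)).const_mul (N / ρ))).congr_deriv ?_
    field_simp [h.freq_pos.ne']
    ring
  have hle : e x - N / ρ * R x ≤ e y - N / ρ * R y := by
    refine monotoneOn_Icc_of_hasDerivAt_nonneg hderiv (fun t ht => ?_)
      (left_mem_Icc.2 hy.1) (right_mem_Icc.2 hy.1) hy.1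
    replace ht := Ioo_subset_Icc_self ht
    have hxt : φ x ≤ φ t := hmono hx (hsub ht) ht.1
    have hty : φ t ≤ P' := (hmono (hsub ht) (hsub (right_mem_Icc.2 hy.1)) ht.2).trans hP'
    exact mul_nonneg (mul_nonneg (h.weight_nonneg t (hsub ht)) (h.factor_pos t).le)
      (sub_nonneg.2 (hv.tangent _ ⟨hxt, hty⟩))
  have hN : 0 ≤ N / ρ := by
    have hφx : φ 0 ≤ φ x := hmono (left_mem_Icc.2 (hx.1.trans hx.2)) hx hx.1
    rw [h.angle_zero] at hφx
    exact div_nonneg (hφx.trans hv.lt_bottom.le) h.freq_pos.le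
  linarith [mul_le_mul_of_nonneg_left (h.factor_le_of_valley hx hy hv hP') hN]

theorem defect_le_of_peak (h : IsPruferVariation p ρ b f f' m φ R e)
    (hvalley : ∀ P, f P = 1 → ∃ N P', P + 1 ≤ P' ∧ f P' = 1 ∧ IsValley p f f' P N P') {x : ℝ}
    (hx : x ∈ Icc 0 b) (hpeak : f (φ x) = 1) : e x ≤ e b := by
  obtain ⟨n, hn⟩ := exists_nat_ge (φ b - φ x)
  induction n generalizing x with
  | zero =>
    obtain ⟨N, P', hPP', -, hv⟩ := hvalley _ hpeak
    exact h.defect_le_of_valley hx ⟨hx.2, le_rfl⟩ hv (by push_cast at hn; linarith)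
  | succ n ih =>
    obtain ⟨N, P', hPP', hP', hv⟩ := hvalley _ hpeak
    rcases le_total (φ b) P' with hb | hb
    · exact h.defect_le_of_valley hx ⟨hx.2, le_rfl⟩ hv hb
    · obtain ⟨y, hy, rfl⟩ := h.exists_angle_eq hx ⟨hx.2, le_rfl⟩ ⟨by linarith, hb⟩
      exact (h.defect_le_of_valley hx hy hv le_rfl).trans
        (ih ⟨hx.1.trans hy.1, hy.2⟩ hP' (by push_cast at hn; linarith))

theorem defect_pos_of_first_ascent (h : IsPruferVariation p ρ b f f' m φ R e) {x y : ℝ}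
    (hx : x ∈ Ioc 0 b) (hmx : 0 < m x) (hy : y ∈ Ioc 0 b)
    (hascent : ∀ z ∈ Ioc 0 (φ y), z * f' z < p * f z) : 0 < e y := by
  have hsub : Icc 0 y ⊆ Icc 0 b := Icc_subset_Icc_right hy.2
  have hmono := h.strictMonoOn_angle
  have hfactor : ∀ t ∈ Ioc 0 y, 0 < p * f (φ t) - φ t * f' (φ t) := fun t ht => by
    have htb : t ∈ Icc 0 b := hsub (Ioc_subset_Icc_self ht)
    have hφt : φ 0 < φ t := hmono (left_mem_Icc.2 (hy.1.le.trans hy.2)) htb ht.1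
    rw [h.angle_zero] at hφt
    exact sub_pos.2 (hascent _ ⟨hφt, hmono.monotoneOn htb (Ioc_subset_Icc_self hy) ht.2⟩)
  have hweight : ∀ t ∈ Icc 0 b, t ≤ x → 0 < m t := fun t ht htx =>
    hmx.trans_le (h.weight_anti ht (Ioc_subset_Icc_self hx) htx)
  set c := min x y
  have hc : 0 < c := lt_min hx.1 hy.1
  have hcy : Icc 0 c ⊆ Icc 0 y := Icc_subset_Icc_right (min_le_right x y)
  have hstart : e 0 < e c :=
    strictMonoOn_Icc_of_hasDerivAt_pos (fun t ht => h.hasDerivAt_defect t (hsub (hcy ht)))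
      (fun t ht => mul_pos (mul_pos (hweight t (hsub (hcy (Ioo_subset_Icc_self ht)))
        (ht.2.le.trans (min_le_left x y))) (h.factor_pos t))
        (hfactor t ⟨ht.1, ht.2.le.trans (min_le_right x y)⟩))
      (left_mem_Icc.2 hc.le) (right_mem_Icc.2 hc.le) hc
  have hrest : e c ≤ e y :=
    monotoneOn_Icc_of_hasDerivAt_nonneg (fun t ht => h.hasDerivAt_defect t (hsub ht))
      (fun t ht => mul_nonneg (mul_nonneg (h.weight_nonneg t (hsub (Ioo_subset_Icc_self ht)))
        (h.factor_pos t).le) (hfactor t (Ioo_subset_Ioc_self ht)).le)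
      ⟨hc.le, min_le_right x y⟩ (right_mem_Icc.2 hy.1.le) (min_le_right x y)
  exact (h.defect_zero ▸ hstart).trans_le hrest

theorem defect_pos {S C : ℝ → ℝ}
    (h : IsPruferVariation p ρ b (fun z => |S z| ^ p) (sinePowDeriv p S C) m φ R e)
    (hS : IsGenSine p S C) (hS0 : S 0 = 0) {x : ℝ} (hx : x ∈ Ioc 0 b) (hmx : 0 < m x) :
    0 < e b := by
  have hb : 0 < b := hx.1.trans_le hx.2
  obtain ⟨P, hP, hpeak, hascent⟩ := hS.exists_ascent hS0
  have hascent' : ∀ z ∈ Ioc 0 P, z * sinePowDeriv p S C z < p * |S z| ^ p := fun z hz => by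
    simpa only [sub_zero] using (hascent z hz).2
  rcases le_total (φ b) P with hbP | hPb
  · exact h.defect_pos_of_first_ascent hx hmx (right_mem_Ioc.2 hb)
      fun z hz => hascent' z ⟨hz.1, hz.2.trans hbP⟩
  · obtain ⟨y, hy, rfl⟩ := h.exists_angle_eq (left_mem_Icc.2 hb.le) (right_mem_Icc.2 hb.le)
      ⟨h.angle_zero.trans_le hP.le, hPb⟩
    have hy0 : 0 < y := hy.1.lt_of_ne (by rintro rfl; exact hP.ne' h.angle_zero)
    exact (h.defect_pos_of_first_ascent hx hmx ⟨hy0, hy.2⟩ hascent').trans_le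
      (h.defect_le_of_peak (fun _ => hS.exists_valley) hy hpeak)

theorem defect_nonneg {S C : ℝ → ℝ}
    (h : IsPruferVariation p ρ b (fun z => |S z| ^ p) (sinePowDeriv p S C) m φ R e)
    (hS : IsGenSine p S C) (hS0 : S 0 = 0) (hb : 0 ≤ b) : 0 ≤ e b := by
  by_cases hm : ∃ x ∈ Ioc 0 b, 0 < m x
  · obtain ⟨x, hx, hmx⟩ := hm
    exact (h.defect_pos hS hS0 hx hmx).le
  · push Not at hm
    rw [← h.defect_zero]
    refine monotoneOn_Icc_of_hasDerivAt_nonneg h.hasDerivAt_defect (fun t ht => ?_)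
      (left_mem_Icc.2 hb) (right_mem_Icc.2 hb) hb
    rw [le_antisymm (hm t (Ioo_subset_Ioc_self ht)) (h.weight_nonneg t (Ioo_subset_Icc_self ht)),
      zero_mul, zero_mul]

end IsPruferVariation

namespace IsPruferVariation

variable {p ρ b : ℝ} {f f' q R e : ℝ → ℝ} {φ : ℝ → ℝ → ℝ} {L : ℝ≥0}

theorem hasDerivAt_angle_param
    (h : IsPruferVariation p ρ b f f' (fun x => -q x * ρ ^ (-p)) (fun x => φ x ρ) R e)
    (hb : 0 ≤ b) (hq : ContinuousOn q (Icc 0 b)) (hf' : Continuous f') (hfL : LipschitzWith L f)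
    (hφ0 : ∀ r, 0 < r → φ 0 r = 0)
    (hφ : ∀ r, 0 < r → ∀ x ∈ Icc 0 b,
      HasDerivAt (fun t => φ t r) (r - q x / r ^ (p - 1) * f (φ x r)) x) :
    HasDerivAt (φ b) (φ b ρ / ρ - e b / R b) ρ := by
  have hpos : ∀ᶠ r in 𝓝 ρ, 0 < r := eventually_gt_nhds h.freq_pos
  have hpow : ∀ r : ℝ, 0 < r → HasDerivAt (fun r : ℝ => r ^ (1 - p)) ((1 - p) * r ^ (-p)) r :=
    fun r hr => (Real.hasDerivAt_rpow_const (Or.inl hr.ne')).congr_deriv (by ring_nf)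
  refine hasDerivAt_param_of_separated_ode (v := fun t => φ t ρ / ρ - e t / R t) hb hq
    (hpos.mono hpow) ((Real.continuousAt_rpow_const _ _ (Or.inl h.freq_pos.ne')).const_mul _)
    h.hasDerivAt_profile hf' hfL (hpos.mono fun r hr t ht => ?_)
    (hpos.mono fun r hr => (hφ0 r hr).trans h.angle_zero.symm) (fun t ht => ?_) ?_
  · refine (hφ r hr t ht).congr_deriv ?_
    rw [div_eq_mul_inv, ← Real.rpow_neg hr.le, neg_sub]
  · refine (h.hasDerivAt_linearized ht).congr_deriv ?_
    rw [sub_eq_neg_add 1 p, Real.rpow_add_one h.freq_pos.ne']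
    ring
  · rw [h.angle_zero, h.defect_zero, zero_div, zero_div, sub_zero]

theorem hasDerivAt_angle_div_param
    (h : IsPruferVariation p ρ b f f' (fun x => -q x * ρ ^ (-p)) (fun x => φ x ρ) R e)
    (hb : 0 ≤ b) (hq : ContinuousOn q (Icc 0 b)) (hf' : Continuous f') (hfL : LipschitzWith L f)
    (hφ0 : ∀ r, 0 < r → φ 0 r = 0)
    (hφ : ∀ r, 0 < r → ∀ x ∈ Icc 0 b,
      HasDerivAt (fun t => φ t r) (r - q x / r ^ (p - 1) * f (φ x r)) x) :
    HasDerivAt (fun r => φ b r / r) (-(e b / (ρ * R b))) ρ := by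
  have hρ := h.freq_pos.ne'
  have hR := (h.factor_pos b).ne'
  refine ((h.hasDerivAt_angle_param hb hq hf' hfL hφ0 hφ).fun_div
    (hasDerivAt_id' ρ) hρ).congr_deriv ?_
  field_simp
  ring

end IsPruferVariation

theorem sub_div_rpow_mul {ρ : ℝ} (hρ : 0 < ρ) (p y s : ℝ) :
    ρ - y / ρ ^ (p - 1) * s = ρ * (1 + -y * ρ ^ (-p) * s) := by
  rw [div_eq_mul_inv, ← Real.rpow_neg hρ.le, neg_sub, sub_eq_neg_add 1 p,
    Real.rpow_add_one hρ.ne']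
  ring

theorem theta_rho_derivative_nonpos_general {p x0 ρ d : ℝ} {q S C : ℝ → ℝ} {φ : ℝ → ℝ → ℝ}
    (hS : IsGenSine p S C) (hS0 : S 0 = 0) (hx0 : 0 ≤ x0) (hqc : ContinuousOn q (Icc 0 x0))
    (hqneg : ∀ x ∈ Icc 0 x0, q x ≤ 0) (hqmono : MonotoneOn q (Icc 0 x0))
    (hφ0 : ∀ r, 0 < r → φ 0 r = 0)
    (hφ : ∀ r, 0 < r → ∀ x ∈ Icc 0 x0,
      HasDerivAt (fun t => φ t r) (r - q x / r ^ (p - 1) * |S (φ x r)| ^ p) x)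
    (hρ : 0 < ρ) (hd : HasDerivAt (fun r => φ x0 r / r) d ρ) :
    d ≤ 0 ∧ (d = 0 → ∀ x ∈ Ioc 0 x0, q x = 0) := by
  have hρp : 0 < ρ ^ (-p) := Real.rpow_pos_of_pos hρ _
  obtain ⟨R, e, h⟩ := IsPruferVariation.exists_factor_defect
    (p := p) (m := fun x => -q x * ρ ^ (-p)) hx0
    (fun z => hasDerivAt_abs_rpow_comp hS.one_lt (hS.hasDerivAt z)) hS.continuous_sinePowDeriv
    (fun z => ⟨Real.rpow_nonneg (abs_nonneg _) p, hS.abs_rpow_le_one z⟩) hρ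
    (hqc.neg.mul_const _) (fun x hx => mul_nonneg (neg_nonneg.2 (hqneg x hx)) hρp.le)
    (fun x hx y hy hxy => mul_le_mul_of_nonneg_right (neg_le_neg (hqmono hx hy hxy)) hρp.le)
    (hφ0 ρ hρ) fun x hx => (hφ ρ hρ x hx).congr_deriv
      (sub_div_rpow_mul hρ p (q x) _)
  have hd_eq : d = -(e x0 / (ρ * R x0)) := hd.unique <|
    h.hasDerivAt_angle_div_param hx0 hqc hS.continuous_sinePowDeriv hS.lipschitzWith_abs_rpow hφ0 hφ
  have hden : 0 < ρ * R x0 := mul_pos hρ (h.factor_pos x0)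
  refine ⟨hd_eq ▸ neg_nonpos.2 (div_nonneg (h.defect_nonneg hS hS0 hx0) hden.le),
    fun hd0 x hx => ?_⟩
  by_contra hqx
  have hmx : 0 < -q x * ρ ^ (-p) :=
    mul_pos (neg_pos.2 ((hqneg x (Ioc_subset_Icc_self hx)).lt_of_ne hqx)) hρp
  exact (div_pos (h.defect_pos hS hS0 hx hmx) hden).ne' (neg_eq_zero.1 (hd_eq.symm.trans hd0))

/-- ∂θ/∂ρ (x₀, ρ) ≤ 0 for ρ ≥ (-2q(0))^{1/p}, with equality forcing q ≡ 0 on (0,x₀]. -/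
theorem theta_rho_derivative_nonpos
    (p x0 : ℝ) (hp : 1 < p) (hx0 : x0 ∈ Set.Ioc (0:ℝ) 1)
    (q : ℝ → ℝ) (hqc : ContinuousOn q (Set.Icc 0 x0))
    (hqneg : ∀ x ∈ Set.Icc (0:ℝ) x0, q x ≤ 0)
    (hqmono : MonotoneOn q (Set.Icc 0 x0))
    (Sp Sp' : ℝ → ℝ)
    (hSpderiv : ∀ x : ℝ, HasDerivAt Sp (Sp' x) x)
    (hSpode : ∀ x : ℝ, HasDerivAt (fun t => |Sp' t| ^ (p - 2) * Sp' t)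
      (-(p - 1) * (|Sp x| ^ (p - 2) * Sp x)) x)
    (hSp0 : Sp 0 = 0) (hSp1 : Sp' 0 = 1)
    (φ : ℝ → ℝ → ℝ)  -- φ x ρ : Prüfer angle
    (hφ0 : ∀ ρ : ℝ, 0 < ρ → φ 0 ρ = 0)
    (hφ : ∀ ρ : ℝ, 0 < ρ → ∀ x ∈ Set.Icc (0:ℝ) x0,
      HasDerivAt (fun t => φ t ρ) (ρ - q x / ρ ^ (p - 1) * |Sp (φ x ρ)| ^ p) x)
    (θd : ℝ → ℝ)  -- θd ρ = ∂θ/∂ρ (x₀, ρ), where θ = φ/ρ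
    (hθd : ∀ ρ : ℝ, 0 < ρ → HasDerivAt (fun r => φ x0 r / r) (θd ρ) ρ) :
    (∀ ρ : ℝ, 0 < ρ → (-2 * q 0) ^ (1 / p) ≤ ρ → θd ρ ≤ 0) ∧
    (∀ ρ : ℝ, 0 < ρ → (-2 * q 0) ^ (1 / p) ≤ ρ → θd ρ = 0 →
      ∀ x ∈ Set.Ioc (0:ℝ) x0, q x = 0) := by
  have hS : IsGenSine p Sp Sp' := .of_initial hp hSpderiv hSpode <| by
    rw [hSp0, hSp1, abs_zero, abs_one, Real.zero_rpow (zero_lt_one.trans hp).ne', Real.one_rpow,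
      zero_add]
  have h := fun ρ hρ => theta_rho_derivative_nonpos_general hS hSp0 hx0.1.le hqc hqneg hqmono
    hφ0 hφ hρ (hθd ρ hρ)
  exact ⟨fun ρ hρ _ => (h ρ hρ).1, fun ρ hρ _ => (h ρ hρ).2⟩
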